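/- For every n ≥ 0 and all x₁, x₂, y₁, y₂ ∈ (−1,1), the reproducing kernel of Π_n² in L²(W_{−1/2}) satisfies K_n(W_{−1/2}; (x₁+x₂, x₁x₂), (y₁+y₂, y₁y₂)) = (1/2) [ k_n(w; x₁, y₁) k_n(w; x₂, y₂) + k_n(w; x₂, y₁) k_n(w; x₁, y₂) ]. -/

import Mathlib

open MeasureTheory Real Set Filter
open scoped ENNReal

noncomputable section

/-- The parabolic-type domain `Ω`, the image of the triangle `-1 < x < y < 1`
under `(x, y) ↦ (x + y, x y)`. -/
def omegaDom : Set (ℝ × ℝ) :=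
  {q | ∃ x y : ℝ, -1 < x ∧ x < y ∧ y < 1 ∧ q = (x + y, x * y)}

/-- The square `[-1,1]²`. -/
def sqDom : Set (ℝ × ℝ) := Icc (-1 : ℝ) 1 ×ˢ Icc (-1 : ℝ) 1

/-- The open triangle `-1 < x < y < 1`. -/
def triDom : Set (ℝ × ℝ) := {q | -1 < q.1 ∧ q.1 < q.2 ∧ q.2 < 1}

/-- The smaller root `x(u,v)` of `t² - u t + v = 0`. -/
def xRoot (q : ℝ × ℝ) : ℝ := (q.1 - Real.sqrt (q.1 ^ 2 - 4 * q.2)) / 2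

/-- The larger root `y(u,v)` of `t² - u t + v = 0`. -/
def yRoot (q : ℝ × ℝ) : ℝ := (q.1 + Real.sqrt (q.1 ^ 2 - 4 * q.2)) / 2

/-- Evaluation of a two-variable polynomial at a point of `ℝ²`. -/
def evalP (P : MvPolynomial (Fin 2) ℝ) (q : ℝ × ℝ) : ℝ :=
  MvPolynomial.eval ![q.1, q.2] P

/-- The space `V_n(W)` of orthogonal polynomials of degree `n` for the weight `W`
on the domain `D`: polynomials of exact total degree `n` orthogonal to all
polynomials of lower degree. -/
def Vpoly (D : Set (ℝ × ℝ)) (W : ℝ × ℝ → ℝ) (n : ℕ) : Set (MvPolynomial (Fin 2) ℝ) :=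
  {P | P.totalDegree = n ∧ ∀ Q : MvPolynomial (Fin 2) ℝ, Q.totalDegree < n →
    (∫ q in D, evalP P q * evalP Q q * W q) = 0}

/-- `Q 0, …, Q n` is an orthonormal basis of `V_n(W)` on `D`. -/
def isONBVn (D : Set (ℝ × ℝ)) (W : ℝ × ℝ → ℝ) (n : ℕ)
    (Q : ℕ → MvPolynomial (Fin 2) ℝ) : Prop :=
  (∀ k, k ≤ n → Q k ∈ Vpoly D W n) ∧
  (∀ k, k ≤ n → ∀ j, j ≤ n →
    (∫ q in D, evalP (Q k) q * evalP (Q j) q * W q) = if k = j then 1 else 0) ∧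
  (∀ R ∈ Vpoly D W n, R ∈ Submodule.span ℝ (Q '' Set.Iic n))

/-- `K` is the reproducing kernel of `Π_n²` in `L²(W)` on the domain `D`:
it is a polynomial function, for each fixed `x ∈ D` it is a polynomial of total
degree `≤ n` in the second variable, and it reproduces every polynomial of total
degree `≤ n`. -/
def IsRK (D : Set (ℝ × ℝ)) (W : ℝ × ℝ → ℝ) (n : ℕ) (K : ℝ × ℝ → ℝ × ℝ → ℝ) : Prop :=
  (∃ KP : MvPolynomial (Fin 4) ℝ,
    ∀ x y : ℝ × ℝ, K x y = MvPolynomial.eval ![x.1, x.2, y.1, y.2] KP) ∧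
  (∀ x ∈ D, ∃ P : MvPolynomial (Fin 2) ℝ, P.totalDegree ≤ n ∧ ∀ y, K x y = evalP P y) ∧
  (∀ P : MvPolynomial (Fin 2) ℝ, P.totalDegree ≤ n →
    ∀ x ∈ D, (∫ y in D, K x y * evalP P y * W y) = evalP P x)

/-- `p` is the sequence of orthonormal polynomials with respect to the weight `w`
on `[-1,1]`: `p n` has degree exactly `n`, positive leading coefficient, and the
`p n` are orthonormal in `L²(w)`. -/
def IsONPS (w : ℝ → ℝ) (p : ℕ → Polynomial ℝ) : Prop :=
  (∀ n, (p n).natDegree = n) ∧ (∀ n, 0 < (p n).leadingCoeff) ∧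
  (∀ n m, (∫ x in Icc (-1:ℝ) 1, (p n).eval x * (p m).eval x * w x)
    = if n = m then 1 else 0)

/-- The Christoffel–Darboux kernel `k_n(x,y) = ∑_{j=0}^n p_j(x) p_j(y)`. -/
def CDK (p : ℕ → Polynomial ℝ) (n : ℕ) (x y : ℝ) : ℝ :=
  ∑ j ∈ Finset.range (n + 1), (p j).eval x * (p j).eval y

/-- The Jacobi factor `J_{a,b}(x) = (1-x)^a (1+x)^b`. -/
def Jw (a b : ℝ) (x : ℝ) : ℝ := (1 - x) ^ a * (1 + x) ^ b

/-- The factor `J*_{a,b}(u,v) = (1-u+v)^a (1+u+v)^b` on `Ω`. -/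
def JstarW (a b : ℝ) (q : ℝ × ℝ) : ℝ := (1 - q.1 + q.2) ^ a * (1 + q.1 + q.2) ^ b

/-- Modulus of continuity of `ψ` on `[-1,1]`. -/
def modCont (ψ : ℝ → ℝ) (t : ℝ) : ℝ :=
  sSup {d : ℝ | ∃ x ∈ Icc (-1:ℝ) 1, ∃ y ∈ Icc (-1:ℝ) 1, |x - y| ≤ t ∧ d = |ψ x - ψ y|}

/-- The generalized Jacobi class `GJ`. -/
def IsGJ (w : ℝ → ℝ) : Prop :=
  ∃ (r : ℕ) (ψ : ℝ → ℝ) (γ₀ γ₁ : ℝ) (γs xs : Fin r → ℝ),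
    -1 < γ₀ ∧ -1 < γ₁ ∧ (∀ i, -1 < γs i) ∧
    StrictMono xs ∧ (∀ i, xs i ∈ Ioo (-1:ℝ) 1) ∧
    ContinuousOn ψ (Icc (-1:ℝ) 1) ∧ (∀ x ∈ Icc (-1:ℝ) 1, 0 < ψ x) ∧
    IntegrableOn (fun t => modCont ψ t / t) (Ioc (0:ℝ) 1) ∧
    (∀ x : ℝ, |x| ≤ 1 → w x = ψ x * (1 - x) ^ γ₀ * (1 + x) ^ γ₁ * ∏ i, |x - xs i| ^ γs i) ∧
    (∀ x : ℝ, 1 < |x| → w x = 0)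

/-- The `L^p`-norm `‖f‖_{w,e}` on `[-1,1]` (as an extended nonnegative real). -/
def lpnormI (w : ℝ → ℝ) (e : ℝ) (f : ℝ → ℝ) : ℝ≥0∞ :=
  (∫⁻ x in Icc (-1:ℝ) 1, ENNReal.ofReal (|f x| ^ e * w x)) ^ (1 / e)

/-- The `L^p`-norm `‖f‖_{W,e}` on a planar domain `D` (as an extended nonnegative real). -/
def lpnormD (D : Set (ℝ × ℝ)) (W : ℝ × ℝ → ℝ) (e : ℝ) (f : ℝ × ℝ → ℝ) : ℝ≥0∞ :=
  (∫⁻ q in D, ENNReal.ofReal (|f q| ^ e * W q)) ^ (1 / e)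

/-- The operator `s_n^{i,j}(w; f, x)` built from the Christoffel–Darboux kernel of the
orthonormal polynomials `pij` of the weight `J_{i,j} w`. -/
def snOp (w : ℝ → ℝ) (pij : ℕ → Polynomial ℝ) (i j : ℝ) (n : ℕ) (f : ℝ → ℝ) (x : ℝ) : ℝ :=
  Jw (i/2) (j/2) x * ∫ y in Icc (-1:ℝ) 1, f y * CDK pij n x y * Jw (i/2) (j/2) y * w y

/-- Substitution `(x, y) ↦ (2 x y, x² + y² - 1)` on two-variable polynomials. -/
def quadSub (P : MvPolynomial (Fin 2) ℝ) : MvPolynomial (Fin 2) ℝ :=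
  MvPolynomial.aeval
    ![2 * MvPolynomial.X 0 * MvPolynomial.X 1,
      MvPolynomial.X 0 ^ 2 + MvPolynomial.X 1 ^ 2 - 1] P

/-- A one-variable polynomial viewed as a polynomial in the first variable. -/
def polyX (q : Polynomial ℝ) : MvPolynomial (Fin 2) ℝ :=
  Polynomial.aeval (MvPolynomial.X 0) q

/-- A one-variable polynomial viewed as a polynomial in the second variable. -/
def polyY (q : Polynomial ℝ) : MvPolynomial (Fin 2) ℝ :=
  Polynomial.aeval (MvPolynomial.X 1) q

/-- Power sums `s^m + t^m` as polynomials in `s+t`, `st`. -/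
def psumP : ℕ → MvPolynomial (Fin 2) ℝ
  | 0 => MvPolynomial.C 2
  | 1 => MvPolynomial.X 0
  | (m+2) => MvPolynomial.X 0 * psumP (m+1) - MvPolynomial.X 1 * psumP m

theorem psumP_deg : ∀ m, (psumP m).totalDegree ≤ m
  | 0 => by simp [psumP]
  | 1 => by simp [psumP]
  | (m+2) => by
    have h1 := psumP_deg (m+1)
    have h2 := psumP_deg m
    rw [psumP]
    refine (MvPolynomial.totalDegree_sub _ _).trans (max_le ?_ ?_)
    · refine (MvPolynomial.totalDegree_mul _ _).trans ?_
      rw [MvPolynomial.totalDegree_X]; omega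
    · refine (MvPolynomial.totalDegree_mul _ _).trans ?_
      rw [MvPolynomial.totalDegree_X]; omega

theorem psumP_eval (s t : ℝ) : ∀ m, evalP (psumP m) (s + t, s * t) = s ^ m + t ^ m
  | 0 => by simp [psumP, evalP]; norm_num
  | 1 => by simp [psumP, evalP]
  | (m+2) => by
    have h1 := psumP_eval s t (m+1)
    have h2 := psumP_eval s t m
    simp only [evalP] at h1 h2 ⊢
    rw [psumP, map_sub, map_mul, map_mul, h1, h2]
    simp
    ring

theorem exists_sym_mono (n i j : ℕ) (hi : i ≤ n) (hj : j ≤ n) :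
    ∃ Q : MvPolynomial (Fin 2) ℝ, Q.totalDegree ≤ n ∧
      ∀ s t : ℝ, evalP Q (s + t, s * t) = s ^ i * t ^ j + t ^ i * s ^ j := by
  wlog hij : i ≤ j generalizing i j
  · obtain ⟨Q, hQ, h⟩ := this j i hj hi (by omega)
    exact ⟨Q, hQ, fun s t => by rw [h]; ring⟩
  obtain ⟨d, rfl⟩ := Nat.exists_eq_add_of_le hij
  refine ⟨MvPolynomial.X 1 ^ i * psumP d, ?_, fun s t => ?_⟩
  · refine (MvPolynomial.totalDegree_mul _ _).trans ?_
    have := psumP_deg d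
    rw [MvPolynomial.totalDegree_X_pow]; omega
  · have := psumP_eval s t d
    simp only [evalP] at this ⊢
    rw [map_mul, this]
    simp
    ring

theorem exists_sym_poly (n : ℕ) (a b : Polynomial ℝ) (ha : a.natDegree ≤ n) (hb : b.natDegree ≤ n) :
    ∃ Q : MvPolynomial (Fin 2) ℝ, Q.totalDegree ≤ n ∧
      ∀ s t : ℝ, evalP Q (s + t, s * t) = a.eval s * b.eval t + a.eval t * b.eval s := by
  have H : ∀ i j : ℕ, ∃ Q : MvPolynomial (Fin 2) ℝ, i ≤ n → j ≤ n → (Q.totalDegree ≤ n ∧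
      ∀ s t : ℝ, evalP Q (s + t, s * t) = s ^ i * t ^ j + t ^ i * s ^ j) := by
    intro i j
    by_cases h : i ≤ n ∧ j ≤ n
    · obtain ⟨Q, hQ⟩ := exists_sym_mono n i j h.1 h.2
      exact ⟨Q, fun _ _ => hQ⟩
    · exact ⟨0, fun h1 h2 => (h ⟨h1, h2⟩).elim⟩
  choose Q hQ using H
  refine ⟨∑ i ∈ Finset.range (n+1), ∑ j ∈ Finset.range (n+1),
    (a.coeff i * b.coeff j) • Q i j, ?_, fun s t => ?_⟩
  · refine MvPolynomial.totalDegree_finsetSum_le fun i hi =>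
      MvPolynomial.totalDegree_finsetSum_le fun j hj => ?_
    refine (MvPolynomial.totalDegree_smul_le _ _).trans (hQ i j ?_ ?_).1
    · simpa [Nat.lt_succ_iff] using hi
    · simpa [Nat.lt_succ_iff] using hj
  · rw [Polynomial.eval_eq_sum_range' (Nat.lt_succ_of_le ha),
      Polynomial.eval_eq_sum_range' (Nat.lt_succ_of_le hb),
      Polynomial.eval_eq_sum_range' (Nat.lt_succ_of_le ha),
      Polynomial.eval_eq_sum_range' (Nat.lt_succ_of_le hb),
      Finset.sum_mul_sum, Finset.sum_mul_sum, ← Finset.sum_add_distrib]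
    simp only [evalP, map_sum]
    refine Finset.sum_congr rfl fun i hi => ?_
    rw [← Finset.sum_add_distrib]
    refine Finset.sum_congr rfl fun j hj => ?_
    have := (hQ i j (by simpa [Nat.lt_succ_iff] using hi) (by simpa [Nat.lt_succ_iff] using hj)).2 s t
    simp only [evalP] at this
    rw [MvPolynomial.smul_eval, this]
    ring

theorem exists_slice (n : ℕ) (P : MvPolynomial (Fin 2) ℝ) (hP : P.totalDegree ≤ n) (s : ℝ) :
    ∃ a : Polynomial ℝ, a.natDegree ≤ n ∧ ∀ t, a.eval t = evalP P (s + t, s * t) := by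
  refine ⟨∑ d ∈ P.support, Polynomial.C (P.coeff d) *
    ((Polynomial.C s + Polynomial.X) ^ d 0 * (Polynomial.C s * Polynomial.X) ^ d 1), ?_, fun t => ?_⟩
  · refine Polynomial.natDegree_sum_le_of_forall_le _ _ fun d hd => ?_
    have h := (MvPolynomial.le_totalDegree hd).trans hP
    rw [Finsupp.sum_fintype _ _ (fun _ => rfl), Fin.sum_univ_two] at h
    refine (Polynomial.natDegree_C_mul_le _ _).trans (le_trans ?_ h)
    refine Polynomial.natDegree_mul_le.trans (add_le_add ?_ ?_)
    · refine (Polynomial.natDegree_pow_le_of_le (m := 1) _ ?_).trans (by simp)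
      compute_degree
    · refine (Polynomial.natDegree_pow_le_of_le (m := 1) _ ?_).trans (by simp)
      compute_degree
  · rw [evalP, MvPolynomial.eval_eq', Polynomial.eval_finsetSum]
    simp

theorem evalP_cont (P : MvPolynomial (Fin 2) ℝ) : Continuous (evalP P) := by
  unfold evalP
  refine (MvPolynomial.continuous_eval P).comp ?_
  refine continuous_pi fun i => ?_
  fin_cases i <;> simp <;> fun_prop

theorem poly_int (w : ℝ → ℝ) (hwi : IntegrableOn w (Icc (-1:ℝ) 1)) (f : ℝ → ℝ) (hf : Continuous f) :
    IntegrableOn (fun x => f x * w x) (Icc (-1:ℝ) 1) := by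
  obtain ⟨c, hc⟩ := isCompact_Icc.exists_bound_of_continuousOn (s := Icc (-1:ℝ) 1) hf.continuousOn
  refine Integrable.bdd_mul (c := c) hwi hf.aestronglyMeasurable ?_
  exact (ae_restrict_iff' measurableSet_Icc).2 (Eventually.of_forall hc)

theorem poly_int2 (w : ℝ → ℝ) (hwi : IntegrableOn w (Icc (-1:ℝ) 1)) (f : ℝ × ℝ → ℝ)
    (hf : Continuous f) :
    IntegrableOn (fun z => f z * (w z.1 * w z.2)) (Icc (-1:ℝ) 1 ×ˢ Icc (-1:ℝ) 1) := by
  obtain ⟨c, hc⟩ := (isCompact_Icc.prod isCompact_Icc).exists_bound_of_continuousOn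
    (s := Icc (-1:ℝ) 1 ×ˢ Icc (-1:ℝ) 1) hf.continuousOn
  have h := Integrable.mul_prod hwi hwi
  rw [Measure.prod_restrict] at h
  refine Integrable.bdd_mul (c := c) h hf.aestronglyMeasurable ?_
  exact (ae_restrict_iff' (measurableSet_Icc.prod measurableSet_Icc)).2 (Eventually.of_forall hc)

theorem CDK_cont (p : ℕ → Polynomial ℝ) (n : ℕ) (y : ℝ) : Continuous (fun x => CDK p n x y) := by
  unfold CDK
  fun_prop

/-- The one-dimensional reproducing property. -/
theorem CDK_repr (w : ℝ → ℝ) (hwi : IntegrableOn w (Icc (-1:ℝ) 1))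
    (p : ℕ → Polynomial ℝ) (hp : IsONPS w p) (n : ℕ) (y : ℝ) (a : Polynomial ℝ)
    (ha : a.natDegree ≤ n) :
    ∫ x in Icc (-1:ℝ) 1, a.eval x * CDK p n x y * w x = a.eval y := by
  have hI : ∀ a : Polynomial ℝ,
      IntegrableOn (fun x => a.eval x * CDK p n x y * w x) (Icc (-1:ℝ) 1) := fun a =>
    poly_int w hwi _ (a.continuous.mul (CDK_cont p n y))
  have hpj : ∀ j ≤ n, ∫ x in Icc (-1:ℝ) 1, (p j).eval x * CDK p n x y * w x = (p j).eval y := by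
    intro j hj
    have : ∀ x, (p j).eval x * CDK p n x y * w x =
        ∑ i ∈ Finset.range (n+1), (p i).eval y * ((p j).eval x * (p i).eval x * w x) := by
      intro x
      rw [CDK, Finset.mul_sum, Finset.sum_mul]
      refine Finset.sum_congr rfl fun i _ => by ring
    simp only [this]
    rw [integral_finsetSum]
    · simp only [integral_const_mul, hp.2.2]
      simp [Nat.lt_succ_of_le hj]
    · intro i _
      exact (poly_int w hwi _ ((p j).continuous.mul (p i).continuous)).const_mul _
  have key : ∀ m ≤ n, ∀ a : Polynomial ℝ, a.natDegree ≤ m →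
      ∫ x in Icc (-1:ℝ) 1, a.eval x * CDK p n x y * w x = a.eval y := by
    have step : ∀ m ≤ n, ∀ a b : Polynomial ℝ, ∀ c : ℝ, a = b + Polynomial.C c * p m →
      ∫ x in Icc (-1:ℝ) 1, b.eval x * CDK p n x y * w x = b.eval y →
      ∫ x in Icc (-1:ℝ) 1, a.eval x * CDK p n x y * w x = a.eval y := by
      intro m hm a b c h hb
      have : ∀ x, a.eval x * CDK p n x y * w x = b.eval x * CDK p n x y * w x
          + c * ((p m).eval x * CDK p n x y * w x) := by
        intro x; rw [h]; simp; ring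
      simp only [this]
      rw [integral_add (hI b) ((hI _).const_mul _), integral_const_mul, hb, hpj m hm, h]
      simp
    intro m
    induction m with
    | zero =>
      intro hm a ha
      refine step 0 hm a 0 (a.coeff 0 / (p 0).leadingCoeff) ?_ (by simp)
      have h0 := hp.1 0
      have hl := (hp.2.1 0).ne'
      rw [Polynomial.leadingCoeff, h0] at hl ⊢
      conv_lhs => rw [Polynomial.eq_C_of_natDegree_le_zero ha]
      conv_rhs => rw [Polynomial.eq_C_of_natDegree_le_zero h0.le]
      simp only [Polynomial.coeff_C_zero]
      rw [← Polynomial.C_mul, zero_add, div_mul_cancel₀ _ hl]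
    | succ m ih =>
      intro hm a ha
      refine step (m+1) hm a (a - Polynomial.C (a.coeff (m+1) / (p (m+1)).leadingCoeff) * p (m+1))
        (a.coeff (m+1) / (p (m+1)).leadingCoeff) (by ring) (ih (by omega) _ ?_)
      rw [Polynomial.natDegree_le_iff_coeff_eq_zero]
      intro N hN
      have hl := (hp.2.1 (m+1)).ne'
      have h0 := hp.1 (m+1)
      rcases Nat.eq_or_lt_of_le (Nat.succ_le_of_lt hN) with h | h
      · subst h
        rw [Polynomial.leadingCoeff, h0] at hl ⊢
        rw [Polynomial.coeff_sub, Polynomial.coeff_C_mul, Nat.succ_eq_add_one,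
          div_mul_cancel₀ _ hl, sub_self]
      · rw [Polynomial.coeff_sub, Polynomial.coeff_C_mul,
          Polynomial.coeff_eq_zero_of_natDegree_lt (by omega),
          Polynomial.coeff_eq_zero_of_natDegree_lt (p := p (m+1)) (by omega)]
        simp
  exact key n le_rfl a ha

/-- The two-dimensional reproducing property on the square. -/
theorem sq_repr (w : ℝ → ℝ) (hwi : IntegrableOn w (Icc (-1:ℝ) 1))
    (p : ℕ → Polynomial ℝ) (hp : IsONPS w p) (n : ℕ) (y₁ y₂ : ℝ) (P : MvPolynomial (Fin 2) ℝ)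
    (hP : P.totalDegree ≤ n) :
    ∫ z in Icc (-1:ℝ) 1 ×ˢ Icc (-1:ℝ) 1, evalP P (z.1 + z.2, z.1 * z.2) *
      (CDK p n z.1 y₁ * CDK p n z.2 y₂) * (w z.1 * w z.2) = evalP P (y₁ + y₂, y₁ * y₂) := by
  have hc1 := (CDK_cont p n y₁).comp (continuous_fst (X := ℝ) (Y := ℝ))
  have hc2 := (CDK_cont p n y₂).comp (continuous_snd (X := ℝ) (Y := ℝ))
  have hc3 : Continuous (fun z : ℝ × ℝ => evalP P (z.1 + z.2, z.1 * z.2)) :=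
    (evalP_cont P).comp (by fun_prop)
  have hint := poly_int2 w hwi (fun z => evalP P (z.1 + z.2, z.1 * z.2) *
      (CDK p n z.1 y₁ * CDK p n z.2 y₂)) (hc3.mul (hc1.mul hc2))
  rw [Measure.volume_eq_prod] at hint ⊢
  rw [setIntegral_prod _ hint]
  have inner : ∀ s : ℝ, ∫ t in Icc (-1:ℝ) 1, evalP P (s + t, s * t) *
      (CDK p n s y₁ * CDK p n t y₂) * (w s * w t) =
      evalP P (s + y₂, s * y₂) * CDK p n s y₁ * w s := by
    intro s
    obtain ⟨a, ha, hae⟩ := exists_slice n P hP s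
    have := CDK_repr w hwi p hp n y₂ a ha
    rw [← hae, ← this, mul_assoc, ← integral_mul_const]
    refine integral_congr_ae (Eventually.of_forall fun t => ?_)
    simp only [← hae]
    ring
  simp only [inner]
  obtain ⟨a, ha, hae⟩ := exists_slice n P hP y₂
  have := CDK_repr w hwi p hp n y₁ a ha
  rw [add_comm y₁, mul_comm y₁, ← hae, ← this]
  refine integral_congr_ae (Eventually.of_forall fun t => ?_)
  simp only [hae]
  rw [add_comm t, mul_comm t]

theorem tri_image : (fun z : ℝ × ℝ => (z.1 + z.2, z.1 * z.2)) '' triDom = omegaDom := by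
  ext q
  constructor
  · rintro ⟨z, ⟨h1, h2, h3⟩, rfl⟩
    exact ⟨z.1, z.2, h1, h2, h3, rfl⟩
  · rintro ⟨x, y, h1, h2, h3, rfl⟩
    exact ⟨(x, y), ⟨h1, h2, h3⟩, rfl⟩

theorem tri_open : IsOpen triDom := by
  exact (isOpen_lt continuous_const continuous_fst).inter
    ((isOpen_lt continuous_fst continuous_snd).inter (isOpen_lt continuous_snd continuous_const))

theorem sqrt_disc (x y : ℝ) (h : x < y) : Real.sqrt ((x + y) ^ 2 - 4 * (x * y)) = y - x := by
  rw [show (x + y) ^ 2 - 4 * (x * y) = (y - x) ^ 2 by ring, Real.sqrt_sq (by linarith)]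

theorem tri_inj : InjOn (fun z : ℝ × ℝ => (z.1 + z.2, z.1 * z.2)) triDom := by
  rintro ⟨a, b⟩ ⟨-, h, -⟩ ⟨c, d⟩ ⟨-, h', -⟩ he
  simp only [Prod.mk.injEq] at he h h' ⊢
  have h1 := sqrt_disc a b h
  have h2 := sqrt_disc c d h'
  rw [he.1, he.2, h2] at h1
  constructor <;> linarith [he.1]

theorem phi_deriv (z : ℝ × ℝ) : HasFDerivAt (fun z : ℝ × ℝ => (z.1 + z.2, z.1 * z.2))
    (Matrix.toLin (.finTwoProd ℝ) (.finTwoProd ℝ) !![1, 1; z.2, z.1]).toContinuousLinearMap z := by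
  rw [Matrix.toLin_finTwoProd_toContinuousLinearMap]
  convert! HasFDerivAt.prodMk (𝕜 := ℝ)
      ((hasFDerivAt_fst (𝕜 := ℝ) (p := z)).add (hasFDerivAt_snd (𝕜 := ℝ) (p := z)))
      ((hasFDerivAt_fst (𝕜 := ℝ) (p := z)).mul (hasFDerivAt_snd (𝕜 := ℝ) (p := z))) using 2 <;>
  simp [add_comm]

theorem omega_to_tri (w : ℝ → ℝ) (W : ℝ × ℝ → ℝ)
    (hW : ∀ q : ℝ × ℝ, W q
      = 2 * w (xRoot q) * w (yRoot q) * (q.1 ^ 2 - 4 * q.2) ^ (-(1/2) : ℝ))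
    (H : ℝ × ℝ → ℝ) :
    ∫ q in omegaDom, H q * W q =
      2 * ∫ z in triDom, H (z.1 + z.2, z.1 * z.2) * (w z.1 * w z.2) := by
  rw [← tri_image, integral_image_eq_integral_abs_det_fderiv_smul volume tri_open.measurableSet
    (fun z _ => (phi_deriv z).hasFDerivWithinAt) tri_inj, ← integral_const_mul]
  refine setIntegral_congr_fun tri_open.measurableSet ?_
  rintro ⟨x, y⟩ ⟨-, h, -⟩
  simp only at h
  simp only [LinearMap.det_toContinuousLinearMap, LinearMap.det_toLin,
    Matrix.det_fin_two_of, hW, xRoot, yRoot, sqrt_disc x y h, smul_eq_mul]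
  rw [Real.rpow_neg (by nlinarith [sq_nonneg (x - y)]), ← Real.sqrt_eq_rpow, sqrt_disc x y h,
    abs_of_neg (by linarith), show (x + y - (y - x)) / 2 = x by ring,
    show (x + y + (y - x)) / 2 = y by ring]
  have : y - x ≠ 0 := by linarith
  field_simp
  ring

theorem sq_to_tri (F : ℝ × ℝ → ℝ) (hF : IntegrableOn F (Icc (-1:ℝ) 1 ×ˢ Icc (-1:ℝ) 1))
    (hs : ∀ z, F z.swap = F z) :
    ∫ z in Icc (-1:ℝ) 1 ×ˢ Icc (-1:ℝ) 1, F z = 2 * ∫ z in triDom, F z := by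
  have hm := tri_open.measurableSet
  have hm' : MeasurableSet (Prod.swap ⁻¹' triDom) := measurable_swap hm
  have hsub : triDom ⊆ Icc (-1:ℝ) 1 ×ˢ Icc (-1:ℝ) 1 := by
    rintro ⟨x, y⟩ ⟨h1, h2, h3⟩
    simp only at h1 h2 h3
    exact ⟨⟨by simp; linarith, by simp; linarith⟩, ⟨by simp; linarith, by simp; linarith⟩⟩
  have hsub' : Prod.swap ⁻¹' triDom ⊆ Icc (-1:ℝ) 1 ×ˢ Icc (-1:ℝ) 1 := fun z hz =>
    ⟨(hsub hz).2, (hsub hz).1⟩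
  have hdiag : (volume : Measure (ℝ × ℝ)) {z | z.1 = z.2} = 0 := by
    rw [Measure.volume_eq_prod, Measure.measure_prod_null
      (measurableSet_eq_fun measurable_fst measurable_snd)]
    refine Eventually.of_forall fun x => ?_
    have : Prod.mk x ⁻¹' {z : ℝ × ℝ | z.1 = z.2} = {x} := by ext y; simp [eq_comm]
    change volume (Prod.mk x ⁻¹' {z : ℝ × ℝ | z.1 = z.2}) = 0
    rw [this]; simp
  have hae : (Icc (-1:ℝ) 1 ×ˢ Icc (-1:ℝ) 1 : Set (ℝ × ℝ)) =ᵐ[volume]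
      (triDom ∪ Prod.swap ⁻¹' triDom : Set (ℝ × ℝ)) := by
    have h1 : (Icc (-1:ℝ) 1 ×ˢ Icc (-1:ℝ) 1 : Set (ℝ × ℝ)) =ᵐ[volume]
        (Ioo (-1:ℝ) 1 ×ˢ Ioo (-1:ℝ) 1 : Set (ℝ × ℝ)) := by
      rw [Measure.volume_eq_prod]
      exact Measure.set_prod_ae_eq Ioo_ae_eq_Icc.symm Ioo_ae_eq_Icc.symm
    refine h1.trans ?_
    refine ae_eq_set.2 ⟨measure_mono_null ?_ hdiag, ?_⟩
    · rintro ⟨x, y⟩ ⟨⟨hx, hy⟩, hn⟩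
      simp only [mem_union, not_or, triDom, mem_preimage, mem_ofPred_eq, Prod.swap] at *
      rcases lt_trichotomy x y with h | h | h
      · exact (hn.1 ⟨hx.1, h, hy.2⟩).elim
      · exact h
      · exact (hn.2 ⟨hy.1, h, hx.2⟩).elim
    · convert measure_empty (μ := (volume : Measure (ℝ × ℝ)))
      rw [Set.sdiff_eq_empty]
      rintro ⟨x, y⟩ (⟨h1, h2, h3⟩ | ⟨h1, h2, h3⟩) <;>
      · simp only [Prod.swap] at h1 h2 h3
        constructor <;> constructor <;> simp only <;> linarith
  rw [setIntegral_congr_set hae, setIntegral_union ?_ hm' (hF.mono_set hsub) (hF.mono_set hsub'),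
    two_mul]
  · congr 1
    have := (Measure.measurePreserving_swap (μ := (volume : Measure ℝ))
      (ν := (volume : Measure ℝ))).setIntegral_preimage_emb
      MeasurableEquiv.prodComm.measurableEmbedding F triDom
    rw [← Measure.volume_eq_prod] at this
    rw [← this]
    simp only [hs]
  · rw [Set.disjoint_left]
    rintro ⟨x, y⟩ ⟨h1, h2, h3⟩ ⟨h1', h2', h3'⟩
    simp only [Prod.swap] at h2 h2'
    linarith

theorem omega_to_sq (w : ℝ → ℝ) (hwi : IntegrableOn w (Icc (-1:ℝ) 1)) (W : ℝ × ℝ → ℝ)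
    (hW : ∀ q : ℝ × ℝ, W q
      = 2 * w (xRoot q) * w (yRoot q) * (q.1 ^ 2 - 4 * q.2) ^ (-(1/2) : ℝ))
    (H : ℝ × ℝ → ℝ) (hH : Continuous H) :
    ∫ q in omegaDom, H q * W q =
      ∫ z in Icc (-1:ℝ) 1 ×ˢ Icc (-1:ℝ) 1, H (z.1 + z.2, z.1 * z.2) * (w z.1 * w z.2) := by
  rw [omega_to_tri w W hW, sq_to_tri]
  · exact poly_int2 w hwi (fun z => H (z.1 + z.2, z.1 * z.2)) (hH.comp (by fun_prop))
  · rintro ⟨x, y⟩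
    simp only [Prod.swap]
    rw [add_comm, mul_comm y x, mul_comm (w y)]

theorem kernel_on_omega (w : ℝ → ℝ) (hwi : IntegrableOn w (Icc (-1:ℝ) 1))
    (p : ℕ → Polynomial ℝ) (hp : IsONPS w p) (W : ℝ × ℝ → ℝ)
    (hW : ∀ q : ℝ × ℝ, W q
      = 2 * w (xRoot q) * w (yRoot q) * (q.1 ^ 2 - 4 * q.2) ^ (-(1/2) : ℝ))
    (n : ℕ) (K : (ℝ × ℝ) → (ℝ × ℝ) → ℝ) (hK : IsRK omegaDom W n K)
    (x₁ x₂ y₁ y₂ : ℝ) (h1 : -1 < x₁) (h2 : x₁ < x₂) (h3 : x₂ < 1) :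
    K (x₁ + x₂, x₁ * x₂) (y₁ + y₂, y₁ * y₂)
        = (1/2) * (CDK p n x₁ y₁ * CDK p n x₂ y₂ + CDK p n x₂ y₁ * CDK p n x₁ y₂) := by
  obtain ⟨-, hK2, hK3⟩ := hK
  have hx : (x₁ + x₂, x₁ * x₂) ∈ omegaDom := ⟨x₁, x₂, h1, h2, h3, rfl⟩
  obtain ⟨P, hP, hKP⟩ := hK2 _ hx
  have kp : ∀ y : ℝ, ∃ a : Polynomial ℝ, a.natDegree ≤ n ∧ ∀ t, a.eval t = CDK p n t y := by
    intro y
    refine ⟨∑ j ∈ Finset.range (n+1), p j * Polynomial.C ((p j).eval y), ?_, fun t => ?_⟩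
    · refine Polynomial.natDegree_sum_le_of_forall_le _ _ fun j hj => ?_
      refine (Polynomial.natDegree_mul_C_le _ _).trans ?_
      rw [hp.1]
      simpa [Nat.lt_succ_iff] using hj
    · rw [Polynomial.eval_finsetSum, CDK]
      simp
  obtain ⟨a, ha, hae⟩ := kp y₁
  obtain ⟨b, hb, hbe⟩ := kp y₂
  obtain ⟨Q, hQ, hQe⟩ := exists_sym_poly n a b ha hb
  have hr := hK3 Q hQ _ hx
  simp only [hKP] at hr ⊢
  rw [omega_to_sq w hwi W hW (fun q => evalP P q * evalP Q q)
    ((evalP_cont P).mul (evalP_cont Q)), hQe, hae, hae, hbe, hbe] at hr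
  simp only [hQe, hae, hbe] at hr
  have e1 := sq_repr w hwi p hp n y₁ y₂ P hP
  have e2 := sq_repr w hwi p hp n y₂ y₁ P hP
  have hc : ∀ y y' : ℝ, IntegrableOn (fun z : ℝ × ℝ => evalP P (z.1 + z.2, z.1 * z.2) *
      (CDK p n z.1 y * CDK p n z.2 y') * (w z.1 * w z.2)) (Icc (-1:ℝ) 1 ×ˢ Icc (-1:ℝ) 1) := by
    intro y y'
    have hc1 := (CDK_cont p n y).comp (continuous_fst (X := ℝ) (Y := ℝ))
    have hc2 := (CDK_cont p n y').comp (continuous_snd (X := ℝ) (Y := ℝ))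
    have hc3 : Continuous (fun z : ℝ × ℝ => evalP P (z.1 + z.2, z.1 * z.2)) :=
      (evalP_cont P).comp (by fun_prop)
    exact poly_int2 w hwi (fun z => evalP P (z.1 + z.2, z.1 * z.2) *
      (CDK p n z.1 y * CDK p n z.2 y')) (hc3.mul (hc1.mul hc2))
  have e3 := integral_add (hc y₁ y₂) (hc y₂ y₁)
  rw [e1, e2] at e3
  have e4 : ∀ z : ℝ × ℝ, evalP P (z.1 + z.2, z.1 * z.2) *
      (CDK p n z.1 y₁ * CDK p n z.2 y₂ + CDK p n z.2 y₁ * CDK p n z.1 y₂) * (w z.1 * w z.2)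
      = evalP P (z.1 + z.2, z.1 * z.2) *
      (CDK p n z.1 y₁ * CDK p n z.2 y₂) * (w z.1 * w z.2) + evalP P (z.1 + z.2, z.1 * z.2) *
      (CDK p n z.1 y₂ * CDK p n z.2 y₁) * (w z.1 * w z.2) := fun z => by ring
  simp only [e4] at hr
  rw [hr, add_comm y₂, mul_comm y₂] at e3
  linarith

/-- closed formula for the reproducing kernel of `Π_n²` in
`L²(W_{-1/2})` in terms of Christoffel–Darboux kernels. -/
theorem stmt_4
    (w : ℝ → ℝ) (hw0 : ∀ x, 0 ≤ w x)
    (hwi : IntegrableOn w (Icc (-1:ℝ) 1))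
    (hw1 : (∫ x in Icc (-1:ℝ) 1, w x) = 1)
    (hwm : ∀ k : ℕ, IntegrableOn (fun x => x ^ k * w x) (Icc (-1:ℝ) 1))
    (p : ℕ → Polynomial ℝ) (hp : IsONPS w p)
    (W : ℝ × ℝ → ℝ)
    (hW : ∀ q : ℝ × ℝ, W q
      = 2 * w (xRoot q) * w (yRoot q) * (q.1 ^ 2 - 4 * q.2) ^ (-(1/2) : ℝ))
    (K : ℕ → (ℝ × ℝ) → (ℝ × ℝ) → ℝ)
    (hK : ∀ n, IsRK omegaDom W n (K n)) :
    ∀ n : ℕ, ∀ x₁ x₂ y₁ y₂ : ℝ,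
      x₁ ∈ Ioo (-1:ℝ) 1 → x₂ ∈ Ioo (-1:ℝ) 1 → y₁ ∈ Ioo (-1:ℝ) 1 → y₂ ∈ Ioo (-1:ℝ) 1 →
      K n (x₁ + x₂, x₁ * x₂) (y₁ + y₂, y₁ * y₂)
        = (1/2) * (CDK p n x₁ y₁ * CDK p n x₂ y₂ + CDK p n x₂ y₁ * CDK p n x₁ y₂) := by
  intro n x₁ x₂ y₁ y₂ hx1 hx2 _ _
  have main := kernel_on_omega w hwi p hp W hW n (K n) (hK n)
  rcases lt_trichotomy x₁ x₂ with h | h | h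
  · exact main x₁ x₂ y₁ y₂ hx1.1 h hx2.2
  · subst h
    obtain ⟨⟨KP, hKP⟩, -, -⟩ := hK n
    have c1 : Continuous (fun t : ℝ => K n (x₁ + t, x₁ * t) (y₁ + y₂, y₁ * y₂)) := by
      simp only [hKP]
      refine (MvPolynomial.continuous_eval KP).comp (continuous_pi fun i => ?_)
      fin_cases i <;> simp <;> fun_prop
    have c2 : Continuous (fun t : ℝ => (1/2) * (CDK p n x₁ y₁ * CDK p n t y₂
        + CDK p n t y₁ * CDK p n x₁ y₂)) := by
      have := CDK_cont p n y₁
      have := CDK_cont p n y₂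
      fun_prop
    have t1 := (c1.tendsto x₁).mono_left (nhdsWithin_le_nhds (s := Ioi x₁))
    have t2 := (c2.tendsto x₁).mono_left (nhdsWithin_le_nhds (s := Ioi x₁))
    refine tendsto_nhds_unique t1 (t2.congr' ?_)
    filter_upwards [Ioo_mem_nhdsGT hx1.2] with t ht
    exact (main x₁ t y₁ y₂ hx1.1 ht.1 ht.2).symm
  · have := main x₂ x₁ y₁ y₂ hx2.1 h hx1.2
    rw [add_comm x₁, mul_comm x₁, this]
    ring
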